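/- arXiv:1712.09807 — 4 statements merged into one kernel-verified Lean document; each statement's English description precedes it below -/
import Mathlib

section
/- Let ν > 0, T > 0 and let f : [0,T]×[0,π] → ℝ be continuous. Suppose u : [0,T]×[0,π] → ℝ is continuous, has continuous partial derivatives ∂ₜu, ∂ₓu, ∂ₓ²u, satisfies the Burgers equation ∂ₜu − ν ∂ₓ²u + u ∂ₓu = f on [0,T]×[0,π], and satisfies the Dirichlet boundary conditions u(t,0) = u(t,π) = 0 for all t ∈ [0,T]. Then for every r ∈ [0,T] the energy identity holds: ∫₀^π u(r,x)² dx + 2ν ∫₀^r ∫₀^π (∂ₓu(s,x))² dx ds = ∫₀^π u(0,x)² dx + 2 ∫₀^r ∫₀^π f(s,x) u(s,x) dx ds. -/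
open MeasureTheory Set intervalIntegral

/-!
Multiply the equation by `2u`. On the rectangle this reads
`∂ₜ(u²) = 2 f u - 2ν (∂ₓu)² + ∂ₓ(2ν u ∂ₓu - (2/3) u³)`.
The last term is an exact `x`-derivative of a quantity vanishing at `x = 0` and `x = π`, so it
integrates to zero over `[0,π]` for each fixed time. Integrating the remaining terms over
`[0,r] × [0,π]`, with the fundamental theorem of calculus in time for `∂ₜ(u²)` and Fubini's theorem
to exchange the order of integration, gives the identity.
-/

/-- The measure is a product of restrictions to half-open intervals because that is the form in
which iterated interval integrals unfold and Fubini's theorem applies. -/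
lemma integrable_prod_of_continuousOn {a b c d : ℝ} {G : ℝ → ℝ → ℝ}
    (hG : ContinuousOn (fun p : ℝ × ℝ => G p.1 p.2) (Icc a b ×ˢ Icc c d)) :
    Integrable (Function.uncurry G)
      ((volume.restrict (Ioc a b)).prod (volume.restrict (Ioc c d))) := by
  rw [Measure.prod_restrict]
  exact (hG.integrableOn_compact (isCompact_Icc.prod isCompact_Icc)).mono_set
    (prod_mono Ioc_subset_Icc_self Ioc_subset_Icc_self)

lemma intervalIntegrable_inner {a b c d : ℝ} (hab : a ≤ b) (hcd : c ≤ d) {G : ℝ → ℝ → ℝ}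
    (hG : ContinuousOn (fun p : ℝ × ℝ => G p.1 p.2) (Icc a b ×ˢ Icc c d)) :
    IntervalIntegrable (fun s => ∫ x in c..d, G s x) volume a b := by
  rw [intervalIntegrable_iff_integrableOn_Ioc_of_le hab]
  simp only [integral_of_le hcd]
  exact (integrable_prod_of_continuousOn hG).integral_prod_left

lemma integral_swap_of_continuousOn {a b c d : ℝ} (hab : a ≤ b) (hcd : c ≤ d) {G : ℝ → ℝ → ℝ}
    (hG : ContinuousOn (fun p : ℝ × ℝ => G p.1 p.2) (Icc a b ×ˢ Icc c d)) :
    ∫ x in c..d, ∫ s in a..b, G s x = ∫ s in a..b, ∫ x in c..d, G s x := by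
  simp only [integral_of_le hcd, integral_of_le hab]
  exact (integral_integral_swap (integrable_prod_of_continuousOn hG)).symm

/-- Fundamental theorem of calculus for one-sided derivatives at the endpoints. -/
lemma integral_eq_sub_of_hasDerivWithinAt_Icc {a b : ℝ} (hab : a ≤ b) {g g' : ℝ → ℝ}
    (hg : ∀ x ∈ Icc a b, HasDerivWithinAt g (g' x) (Icc a b) x)
    (hg' : ContinuousOn g' (Icc a b)) :
    ∫ x in a..b, g' x = g b - g a :=
  integral_eq_sub_of_hasDerivAt_of_le hab (fun x hx => (hg x hx).continuousWithinAt)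
    (fun x hx => (hg x (Ioo_subset_Icc_self hx)).hasDerivAt (Icc_mem_nhds hx.1 hx.2))
    (hg'.intervalIntegrable_of_Icc hab)

/-- Energy identity for classical solutions of the Burgers equation on `[0,T] × [0,π]`
with Dirichlet boundary conditions. -/
theorem burgers_energy_identity
    (ν T : ℝ) (hν : 0 < ν) (hT : 0 < T)
    (f u ut ux uxx : ℝ → ℝ → ℝ)
    (hf : ContinuousOn (fun p : ℝ × ℝ => f p.1 p.2) (Icc 0 T ×ˢ Icc 0 Real.pi))
    (hu : ContinuousOn (fun p : ℝ × ℝ => u p.1 p.2) (Icc 0 T ×ˢ Icc 0 Real.pi))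
    (hut : ContinuousOn (fun p : ℝ × ℝ => ut p.1 p.2) (Icc 0 T ×ˢ Icc 0 Real.pi))
    (hux : ContinuousOn (fun p : ℝ × ℝ => ux p.1 p.2) (Icc 0 T ×ˢ Icc 0 Real.pi))
    (huxx : ContinuousOn (fun p : ℝ × ℝ => uxx p.1 p.2) (Icc 0 T ×ˢ Icc 0 Real.pi))
    (hdt : ∀ t ∈ Icc (0:ℝ) T, ∀ x ∈ Icc (0:ℝ) Real.pi,
      HasDerivWithinAt (fun s => u s x) (ut t x) (Icc 0 T) t)
    (hdx : ∀ t ∈ Icc (0:ℝ) T, ∀ x ∈ Icc (0:ℝ) Real.pi,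
      HasDerivWithinAt (fun y => u t y) (ux t x) (Icc 0 Real.pi) x)
    (hdxx : ∀ t ∈ Icc (0:ℝ) T, ∀ x ∈ Icc (0:ℝ) Real.pi,
      HasDerivWithinAt (fun y => ux t y) (uxx t x) (Icc 0 Real.pi) x)
    (hPDE : ∀ t ∈ Icc (0:ℝ) T, ∀ x ∈ Icc (0:ℝ) Real.pi,
      ut t x - ν * uxx t x + u t x * ux t x = f t x)
    (hBC : ∀ t ∈ Icc (0:ℝ) T, u t 0 = 0 ∧ u t Real.pi = 0) :
    ∀ r ∈ Icc (0:ℝ) T,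
      (∫ x in (0:ℝ)..Real.pi, (u r x) ^ 2)
        + 2 * ν * ∫ s in (0:ℝ)..r, ∫ x in (0:ℝ)..Real.pi, (ux s x) ^ 2
      = (∫ x in (0:ℝ)..Real.pi, (u 0 x) ^ 2)
        + 2 * ∫ s in (0:ℝ)..r, ∫ x in (0:ℝ)..Real.pi, f s x * u s x := by
  intro r hr
  have hpi : (0:ℝ) ≤ Real.pi := Real.pi_pos.le
  have h0T : (0:ℝ) ∈ Icc 0 T := ⟨le_rfl, hT.le⟩
  have hsub : Icc (0:ℝ) r ⊆ Icc 0 T := Icc_subset_Icc_right hr.2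
  have slice_x : ∀ {G : ℝ → ℝ → ℝ},
      ContinuousOn (fun p : ℝ × ℝ => G p.1 p.2) (Icc 0 T ×ˢ Icc 0 Real.pi) →
      ∀ t ∈ Icc (0:ℝ) T, ContinuousOn (fun x => G t x) (Icc 0 Real.pi) :=
    fun hG t ht => hG.comp (f := fun x : ℝ => (t, x)) (by fun_prop) (fun x hx => ⟨ht, hx⟩)
  have slice_t : ∀ {G : ℝ → ℝ → ℝ},
      ContinuousOn (fun p : ℝ × ℝ => G p.1 p.2) (Icc 0 T ×ˢ Icc 0 Real.pi) →
      ∀ x ∈ Icc (0:ℝ) Real.pi, ContinuousOn (fun t => G t x) (Icc 0 T) :=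
    fun hG x hx => hG.comp (f := fun t : ℝ => (t, x)) (by fun_prop) (fun t ht => ⟨ht, hx⟩)
  have to_r : ∀ {G : ℝ → ℝ → ℝ},
      ContinuousOn (fun p : ℝ × ℝ => G p.1 p.2) (Icc 0 T ×ˢ Icc 0 Real.pi) →
      ContinuousOn (fun p : ℝ × ℝ => G p.1 p.2) (Icc 0 r ×ˢ Icc 0 Real.pi) :=
    fun hG => hG.mono (prod_mono hsub subset_rfl)
  have hcE : ContinuousOn (fun p : ℝ × ℝ => 2 * u p.1 p.2 * ut p.1 p.2)
      (Icc 0 T ×ˢ Icc 0 Real.pi) := by fun_prop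
  have hcX : ContinuousOn (fun p : ℝ × ℝ => ux p.1 p.2 ^ 2)
      (Icc 0 T ×ˢ Icc 0 Real.pi) := by fun_prop
  have hcF : ContinuousOn (fun p : ℝ × ℝ => f p.1 p.2 * u p.1 p.2)
      (Icc 0 T ×ˢ Icc 0 Real.pi) := by fun_prop
  have hcB : ContinuousOn (fun p : ℝ × ℝ => 2 * ν * (ux p.1 p.2 * ux p.1 p.2
      + u p.1 p.2 * uxx p.1 p.2) - 2 * u p.1 p.2 ^ 2 * ux p.1 p.2)
      (Icc 0 T ×ˢ Icc 0 Real.pi) := by fun_prop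
  have hcU : ContinuousOn (fun p : ℝ × ℝ => u p.1 p.2 ^ 2)
      (Icc 0 T ×ˢ Icc 0 Real.pi) := by fun_prop
  have time : ∀ x ∈ Icc (0:ℝ) Real.pi,
      ∫ s in (0:ℝ)..r, 2 * u s x * ut s x = u r x ^ 2 - u 0 x ^ 2 := by
    intro x hx
    refine integral_eq_sub_of_hasDerivWithinAt_Icc (g := fun s => u s x ^ 2) hr.1
      (fun s hs => ?_) ((slice_t (G := fun s x => 2 * u s x * ut s x) hcE x hx).mono hsub)
    exact (((hdt s (hsub hs) x hx).mono hsub).pow 2).congr_deriv (by norm_num)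
  -- The integrand is the `x`-derivative of `2ν u ∂ₓu - (2/3) u³`, which vanishes at both endpoints.
  have boundary : ∀ s ∈ Icc (0:ℝ) T,
      ∫ x in (0:ℝ)..Real.pi,
        (2 * ν * (ux s x * ux s x + u s x * uxx s x) - 2 * u s x ^ 2 * ux s x) = 0 := by
    intro s hs
    rw [integral_eq_sub_of_hasDerivWithinAt_Icc
      (g := fun x => 2 * ν * (u s x * ux s x) - 2 / 3 * u s x ^ 3) hpi (fun x hx => ?_)
      (slice_x (G := fun s x => 2 * ν * (ux s x * ux s x + u s x * uxx s x)
        - 2 * u s x ^ 2 * ux s x) hcB s hs)]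
    · simp [(hBC s hs).1, (hBC s hs).2]
    · refine ((((hdx s hs x hx).mul (hdxx s hs x hx)).const_mul (2 * ν)).sub
        (((hdx s hs x hx).pow 3).const_mul (2 / 3))).congr_deriv ?_
      norm_num
      ring
  have space : ∀ s ∈ Icc (0:ℝ) T,
      ∫ x in (0:ℝ)..Real.pi, 2 * u s x * ut s x
        = 2 * (∫ x in (0:ℝ)..Real.pi, f s x * u s x)
          - 2 * ν * ∫ x in (0:ℝ)..Real.pi, ux s x ^ 2 := by
    intro s hs
    have iF := (slice_x (G := fun s x => f s x * u s x) hcF s hs).intervalIntegrable_of_Icc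
      (μ := volume) hpi
    have iX := (slice_x (G := fun s x => ux s x ^ 2) hcX s hs).intervalIntegrable_of_Icc
      (μ := volume) hpi
    have iB := (slice_x (G := fun s x => 2 * ν * (ux s x * ux s x + u s x * uxx s x)
      - 2 * u s x ^ 2 * ux s x) hcB s hs).intervalIntegrable_of_Icc (μ := volume) hpi
    have hE : ∫ x in (0:ℝ)..Real.pi, 2 * u s x * ut s x
        = ∫ x in (0:ℝ)..Real.pi, ((2 * (f s x * u s x) - 2 * ν * ux s x ^ 2)
          + (2 * ν * (ux s x * ux s x + u s x * uxx s x) - 2 * u s x ^ 2 * ux s x)) := by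
      refine integral_congr fun x hx => ?_
      rw [uIcc_of_le hpi] at hx
      simp only [← hPDE s hs x hx]
      ring
    rw [hE, integral_add ((iF.const_mul 2).sub (iX.const_mul (2 * ν))) iB, boundary s hs,
      integral_sub (iF.const_mul 2) (iX.const_mul (2 * ν)),
      intervalIntegral.integral_const_mul, intervalIntegral.integral_const_mul, add_zero]
  have lhs : ∫ x in (0:ℝ)..Real.pi, ∫ s in (0:ℝ)..r, 2 * u s x * ut s x
      = (∫ x in (0:ℝ)..Real.pi, u r x ^ 2) - ∫ x in (0:ℝ)..Real.pi, u 0 x ^ 2 := by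
    rw [← integral_sub
      ((slice_x (G := fun s x => u s x ^ 2) hcU r hr).intervalIntegrable_of_Icc hpi)
      ((slice_x (G := fun s x => u s x ^ 2) hcU 0 h0T).intervalIntegrable_of_Icc hpi)]
    refine integral_congr fun x hx => ?_
    rw [uIcc_of_le hpi] at hx
    exact time x hx
  have rhs : ∫ s in (0:ℝ)..r, ∫ x in (0:ℝ)..Real.pi, 2 * u s x * ut s x
      = 2 * (∫ s in (0:ℝ)..r, ∫ x in (0:ℝ)..Real.pi, f s x * u s x)
        - 2 * ν * ∫ s in (0:ℝ)..r, ∫ x in (0:ℝ)..Real.pi, ux s x ^ 2 := by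
    have iF := intervalIntegrable_inner (G := fun s x => f s x * u s x) hr.1 hpi (to_r (G := fun s x => f s x * u s x) hcF)
    have iX := intervalIntegrable_inner (G := fun s x => ux s x ^ 2) hr.1 hpi (to_r (G := fun s x => ux s x ^ 2) hcX)
    rw [← intervalIntegral.integral_const_mul, ← intervalIntegral.integral_const_mul,
      ← integral_sub (iF.const_mul 2) (iX.const_mul (2 * ν))]
    refine integral_congr fun s hs => ?_
    rw [uIcc_of_le hr.1] at hs
    exact space s (hsub hs)
  have swap := integral_swap_of_continuousOn (G := fun s x => 2 * u s x * ut s x) hr.1 hpi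
    (to_r (G := fun s x => 2 * u s x * ut s x) hcE)
  rw [lhs, rhs] at swap
  linarith
end

section
/- Let ν > 0, T > 0 and let f : [0,T]×[0,π] → ℝ be continuous. Suppose u : [0,T]×[0,π] → ℝ is continuous, has continuous partial derivatives ∂ₜu, ∂ₓu, ∂ₓ²u, satisfies the Burgers equation ∂ₜu − ν ∂ₓ²u + u ∂ₓu = f on [0,T]×[0,π], and satisfies the Dirichlet boundary conditions u(t,0) = u(t,π) = 0 for all t ∈ [0,T]. Then for every t ∈ [0,T]: ∫₀^π u(t,x)² dx + 2ν ∫₀^t ∫₀^π (∂ₓu(s,x))² dx ds ≤ 2 ∫₀^π u(0,x)² dx + 4 ( ∫₀^t ( ∫₀^π f(s,x)² dx )^{1/2} ds )². -/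
/-!
Energy method. Multiplying the equation by `2u` and integrating over `[0, π]`, the boundary
conditions kill the total derivative `∂ₓ(2ν u ∂ₓu - (2/3) u³)`, which yields
`∫ 2 u ∂ₜu dx = 2 ∫ u f dx - 2ν ∫ (∂ₓu)² dx` (`integral_two_mul_u_ut`). Integrating in time, with
Fubini in place of differentiation under the integral sign (`energy_eq`), gives for the energy
`E(t) = ∫ u(t,x)² dx` and the dissipation `D(t) = 2ν ∫₀ᵗ ∫ (∂ₓu)²`
`E(t) + D(t) = E(0) + 2 ∫₀ᵗ ∫ u f dx ds`.

By Cauchy-Schwarz (`integral_mul_le_sqrt_mul_sqrt`), if `r ≤ t` and `M²` is the maximum of `E` on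
`[0, t]`, then `E(r) + D(r) ≤ E(0) + 2 M A`, where `A` is the `L¹([0,t]; L²)` norm of `f`. Taking for
`r` a maximum point of `E`, `M² ≤ E(0) + 2 M A ≤ E(0) + M²/2 + 2A²`, that is
`M² ≤ 2E(0) + 4A²`. Taking `r = t`, `E(t) + D(t) ≤ E(0) + M²/2 + 2A² ≤ 2E(0) + 4A²`.
-/

open MeasureTheory Set intervalIntegral

/-! ### Integrals of functions continuous on a rectangle -/

lemma continuousOn_slice_left {T L : ℝ} {g : ℝ → ℝ → ℝ}
    (hg : ContinuousOn (fun p : ℝ × ℝ => g p.1 p.2) (Icc 0 T ×ˢ Icc 0 L))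
    {x : ℝ} (hx : x ∈ Icc 0 L) : ContinuousOn (fun s => g s x) (Icc 0 T) :=
  hg.comp (f := fun s : ℝ => (s, x)) (by fun_prop) (fun _ hs => ⟨hs, hx⟩)

lemma continuousOn_slice_right {T L : ℝ} {g : ℝ → ℝ → ℝ}
    (hg : ContinuousOn (fun p : ℝ × ℝ => g p.1 p.2) (Icc 0 T ×ˢ Icc 0 L))
    {s : ℝ} (hs : s ∈ Icc 0 T) : ContinuousOn (fun x => g s x) (Icc 0 L) :=
  hg.comp (f := fun x : ℝ => (s, x)) (by fun_prop) (fun _ hx => ⟨hs, hx⟩)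

lemma continuousOn_integral_slice {T L : ℝ} (hT : 0 ≤ T) (hL : 0 ≤ L) {g : ℝ → ℝ → ℝ}
    (hg : ContinuousOn (fun p : ℝ × ℝ => g p.1 p.2) (Icc 0 T ×ˢ Icc 0 L)) :
    ContinuousOn (fun s => ∫ x in (0:ℝ)..L, g s x) (Icc 0 T) := by
  -- Clamping both variables to the rectangle extends `g` continuously to the whole plane.
  have hc : Continuous (Function.uncurry
      (fun s x : ℝ => g (max 0 (min s T)) (max 0 (min x L)))) := by
    refine hg.comp_continuous
      (f := fun p : ℝ × ℝ => (max 0 (min p.1 T), max 0 (min p.2 L))) (by fun_prop) ?_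
    intro p
    exact ⟨⟨le_max_left _ _, max_le hT (min_le_right _ _)⟩,
      ⟨le_max_left _ _, max_le hL (min_le_right _ _)⟩⟩
  refine (continuous_parametric_intervalIntegral_of_continuous'
    (μ := volume) hc 0 L).continuousOn.congr ?_
  intro s hs
  refine integral_congr fun x hx => ?_
  rw [uIcc_of_le hL] at hx
  simp [hs.1, hs.2, hx.1, hx.2]

lemma integral_swap_of_continuousOn_s1 {T L t : ℝ} (hL : 0 ≤ L) {g : ℝ → ℝ → ℝ}
    (hg : ContinuousOn (fun p : ℝ × ℝ => g p.1 p.2) (Icc 0 T ×ˢ Icc 0 L))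
    (ht : t ∈ Icc 0 T) :
    ∫ s in (0:ℝ)..t, ∫ x in (0:ℝ)..L, g s x = ∫ x in (0:ℝ)..L, ∫ s in (0:ℝ)..t, g s x := by
  apply intervalIntegral_intervalIntegral_swap
  rw [uIoc_of_le ht.1, uIoc_of_le hL]
  refine IntegrableOn.mono_set
    (ContinuousOn.integrableOn_compact (isCompact_Icc.prod isCompact_Icc) hg) ?_
  exact prod_mono (Ioc_subset_Icc_self.trans (Icc_subset_Icc_right ht.2)) Ioc_subset_Icc_self

/-- Cauchy-Schwarz on an interval. -/
lemma integral_mul_le_sqrt_mul_sqrt {L : ℝ} (hL : 0 ≤ L) {v w : ℝ → ℝ}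
    (hv : ContinuousOn v (Icc 0 L)) (hw : ContinuousOn w (Icc 0 L)) :
    ∫ x in (0:ℝ)..L, v x * w x
      ≤ √(∫ x in (0:ℝ)..L, v x ^ 2) * √(∫ x in (0:ℝ)..L, w x ^ 2) := by
  have hv2 : IntervalIntegrable (fun x => v x ^ 2) volume 0 L :=
    (hv.pow 2).intervalIntegrable_of_Icc hL
  have hw2 : IntervalIntegrable (fun x => w x ^ 2) volume 0 L :=
    (hw.pow 2).intervalIntegrable_of_Icc hL
  have hvw : IntervalIntegrable (fun x => v x * w x) volume 0 L :=
    (hv.mul hw).intervalIntegrable_of_Icc hL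
  -- The quadratic polynomial `c ↦ ∫ (c v + w)²` is nonnegative, so its discriminant is not positive.
  have key : discrim (∫ x in (0:ℝ)..L, v x ^ 2) (2 * ∫ x in (0:ℝ)..L, v x * w x)
      (∫ x in (0:ℝ)..L, w x ^ 2) ≤ 0 := by
    refine discrim_le_zero fun c => ?_
    have h0 : 0 ≤ ∫ x in (0:ℝ)..L, (c * v x + w x) ^ 2 :=
      integral_nonneg hL fun x _ => sq_nonneg _
    have h1 : ∫ x in (0:ℝ)..L, (c * v x + w x) ^ 2
        = ∫ x in (0:ℝ)..L, ((c * c) * v x ^ 2 + (2 * c) * (v x * w x) + w x ^ 2) :=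
      integral_congr fun x _ => by ring
    rw [h1, integral_add ((hv2.const_mul _).add (hvw.const_mul _)) hw2,
      integral_add (hv2.const_mul _) (hvw.const_mul _), intervalIntegral.integral_const_mul,
      intervalIntegral.integral_const_mul] at h0
    linarith
  rw [← Real.sqrt_mul (integral_nonneg hL fun x _ => sq_nonneg _)]
  apply Real.le_sqrt_of_sq_le
  rw [discrim] at key
  nlinarith

/-! ### The energy identity -/

/-- The energy balance at a fixed time: the arguments are the time slices of the solution, its
derivatives and the forcing. -/
lemma integral_two_mul_u_ut {ν L : ℝ} (hL : 0 ≤ L) {f u ut ux uxx : ℝ → ℝ}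
    (hf : ContinuousOn f (Icc 0 L)) (hu : ContinuousOn u (Icc 0 L))
    (hux : ContinuousOn ux (Icc 0 L)) (huxx : ContinuousOn uxx (Icc 0 L))
    (hdx : ∀ x ∈ Icc 0 L, HasDerivWithinAt u (ux x) (Icc 0 L) x)
    (hdxx : ∀ x ∈ Icc 0 L, HasDerivWithinAt ux (uxx x) (Icc 0 L) x)
    (hPDE : ∀ x ∈ Icc 0 L, ut x - ν * uxx x + u x * ux x = f x)
    (h0 : u 0 = 0) (h1 : u L = 0) :
    ∫ x in (0:ℝ)..L, 2 * u x * ut x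
      = 2 * (∫ x in (0:ℝ)..L, u x * f x) - 2 * ν * ∫ x in (0:ℝ)..L, ux x ^ 2 := by
  have hflux : ContinuousOn (fun x => 2 * ν * (ux x * ux x + u x * uxx x)
      - 2 / 3 * (3 * u x ^ 2 * ux x)) (Icc 0 L) := by fun_prop
  have hFTC : ∫ x in (0:ℝ)..L, (2 * ν * (ux x * ux x + u x * uxx x)
      - 2 / 3 * (3 * u x ^ 2 * ux x)) = 0 := by
    rw [integral_eq_sub_of_hasDerivAt_of_le
      (f := fun x => 2 * ν * (u x * ux x) - 2 / 3 * u x ^ 3) hL (by fun_prop) ?_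
      (hflux.intervalIntegrable_of_Icc hL)]
    · simp [h0, h1]
    · intro x hx
      have hN := Icc_mem_nhds hx.1 hx.2
      have hx' := Ioo_subset_Icc_self hx
      have d1 := (hdx x hx').hasDerivAt hN
      have d2 := (hdxx x hx').hasDerivAt hN
      have d3 := ((d1.mul d2).const_mul (2 * ν)).sub ((d1.pow 3).const_mul (2 / 3))
      refine d3.congr_deriv ?_
      norm_num
  have huf : IntervalIntegrable (fun x => u x * f x) volume 0 L :=
    (hu.mul hf).intervalIntegrable_of_Icc hL
  have hux2 : IntervalIntegrable (fun x => ux x ^ 2) volume 0 L :=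
    (hux.pow 2).intervalIntegrable_of_Icc hL
  have hsplit : ∫ x in (0:ℝ)..L, 2 * u x * ut x
      = ∫ x in (0:ℝ)..L, (2 * (u x * f x) - 2 * ν * ux x ^ 2
        + (2 * ν * (ux x * ux x + u x * uxx x) - 2 / 3 * (3 * u x ^ 2 * ux x))) := by
    refine integral_congr fun x hx => ?_
    rw [uIcc_of_le hL] at hx
    linear_combination (2 * u x) * hPDE x hx
  rw [hsplit, integral_add ((huf.const_mul _).sub (hux2.const_mul _))
    (hflux.intervalIntegrable_of_Icc hL), hFTC,
    integral_sub (huf.const_mul _) (hux2.const_mul _), intervalIntegral.integral_const_mul, intervalIntegral.integral_const_mul,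
    add_zero]

/-- The energy at time `t` is the initial energy plus the time integral of its formal
derivative. -/
lemma energy_eq {T L t : ℝ} (hL : 0 ≤ L) (ht : t ∈ Icc 0 T) {u ut : ℝ → ℝ → ℝ}
    (hu : ContinuousOn (fun p : ℝ × ℝ => u p.1 p.2) (Icc 0 T ×ˢ Icc 0 L))
    (hut : ContinuousOn (fun p : ℝ × ℝ => ut p.1 p.2) (Icc 0 T ×ˢ Icc 0 L))
    (hdt : ∀ s ∈ Icc 0 T, ∀ x ∈ Icc 0 L,
      HasDerivWithinAt (fun r => u r x) (ut s x) (Icc 0 T) s) :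
    ∫ x in (0:ℝ)..L, u t x ^ 2
      = (∫ x in (0:ℝ)..L, u 0 x ^ 2) + ∫ s in (0:ℝ)..t, ∫ x in (0:ℝ)..L, 2 * u s x * ut s x := by
  have h0 : (0:ℝ) ∈ Icc 0 T := ⟨le_rfl, ht.1.trans ht.2⟩
  have hsub : Icc 0 t ⊆ Icc 0 T := Icc_subset_Icc_right ht.2
  have hprod : ContinuousOn (fun p : ℝ × ℝ => 2 * u p.1 p.2 * ut p.1 p.2)
      (Icc 0 T ×ˢ Icc 0 L) := by fun_prop
  rw [integral_swap_of_continuousOn_s1 (g := fun s x => 2 * u s x * ut s x) hL hprod ht]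
  have hFTC : ∫ x in (0:ℝ)..L, ∫ s in (0:ℝ)..t, 2 * u s x * ut s x
      = ∫ x in (0:ℝ)..L, (u t x ^ 2 - u 0 x ^ 2) := by
    refine integral_congr fun x hx => ?_
    rw [uIcc_of_le hL] at hx
    have hux := continuousOn_slice_left hu hx
    refine integral_eq_sub_of_hasDerivAt_of_le (f := fun s => u s x ^ 2) ht.1
      ((hux.pow 2).mono hsub) ?_
      (((continuousOn_slice_left (g := fun s x => 2 * u s x * ut s x)
        hprod hx).mono hsub).intervalIntegrable_of_Icc ht.1)
    intro s hs
    have hN : Icc 0 T ∈ nhds s := Icc_mem_nhds hs.1 (hs.2.trans_le ht.2)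
    have d := ((hdt s (hsub (Ioo_subset_Icc_self hs)) x hx).hasDerivAt hN).pow 2
    refine d.congr_deriv ?_
    norm_num
  have hint : ∀ s ∈ Icc 0 T, IntervalIntegrable (fun x => u s x ^ 2) volume 0 L := fun s hs =>
    ((continuousOn_slice_right hu hs).pow 2).intervalIntegrable_of_Icc hL
  rw [hFTC, intervalIntegral.integral_sub (hint t ht) (hint 0 h0)]
  ring

/-! ### The a priori estimate -/

/-- A priori estimate for classical solutions of the Burgers equation on `[0,T] × [0,π]`
with Dirichlet boundary conditions. -/
theorem burgers_apriori_estimate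
    (ν T : ℝ) (hν : 0 < ν) (hT : 0 < T)
    (f u ut ux uxx : ℝ → ℝ → ℝ)
    (hf : ContinuousOn (fun p : ℝ × ℝ => f p.1 p.2) (Icc 0 T ×ˢ Icc 0 Real.pi))
    (hu : ContinuousOn (fun p : ℝ × ℝ => u p.1 p.2) (Icc 0 T ×ˢ Icc 0 Real.pi))
    (hut : ContinuousOn (fun p : ℝ × ℝ => ut p.1 p.2) (Icc 0 T ×ˢ Icc 0 Real.pi))
    (hux : ContinuousOn (fun p : ℝ × ℝ => ux p.1 p.2) (Icc 0 T ×ˢ Icc 0 Real.pi))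
    (huxx : ContinuousOn (fun p : ℝ × ℝ => uxx p.1 p.2) (Icc 0 T ×ˢ Icc 0 Real.pi))
    (hdt : ∀ t ∈ Icc (0:ℝ) T, ∀ x ∈ Icc (0:ℝ) Real.pi,
      HasDerivWithinAt (fun s => u s x) (ut t x) (Icc 0 T) t)
    (hdx : ∀ t ∈ Icc (0:ℝ) T, ∀ x ∈ Icc (0:ℝ) Real.pi,
      HasDerivWithinAt (fun y => u t y) (ux t x) (Icc 0 Real.pi) x)
    (hdxx : ∀ t ∈ Icc (0:ℝ) T, ∀ x ∈ Icc (0:ℝ) Real.pi,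
      HasDerivWithinAt (fun y => ux t y) (uxx t x) (Icc 0 Real.pi) x)
    (hPDE : ∀ t ∈ Icc (0:ℝ) T, ∀ x ∈ Icc (0:ℝ) Real.pi,
      ut t x - ν * uxx t x + u t x * ux t x = f t x)
    (hBC : ∀ t ∈ Icc (0:ℝ) T, u t 0 = 0 ∧ u t Real.pi = 0) :
    ∀ t ∈ Icc (0:ℝ) T,
      (∫ x in (0:ℝ)..Real.pi, (u t x) ^ 2)
        + 2 * ν * ∫ s in (0:ℝ)..t, ∫ x in (0:ℝ)..Real.pi, (ux s x) ^ 2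
      ≤ 2 * (∫ x in (0:ℝ)..Real.pi, (u 0 x) ^ 2)
        + 4 * (∫ s in (0:ℝ)..t, Real.sqrt (∫ x in (0:ℝ)..Real.pi, (f s x) ^ 2)) ^ 2 := by
  have hL : (0:ℝ) ≤ Real.pi := Real.pi_pos.le
  set E : ℝ → ℝ := fun s => ∫ x in (0:ℝ)..Real.pi, (u s x) ^ 2 with hE
  set G : ℝ → ℝ := fun s => ∫ x in (0:ℝ)..Real.pi, (ux s x) ^ 2 with hG
  set N : ℝ → ℝ := fun s => √(∫ x in (0:ℝ)..Real.pi, (f s x) ^ 2) with hN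
  set B : ℝ → ℝ := fun s => ∫ x in (0:ℝ)..Real.pi, u s x * f s x with hB
  have cE : ContinuousOn E (Icc 0 T) :=
    continuousOn_integral_slice (g := fun s x => u s x ^ 2) hT.le hL (hu.pow 2)
  have cG : ContinuousOn G (Icc 0 T) :=
    continuousOn_integral_slice (g := fun s x => ux s x ^ 2) hT.le hL (hux.pow 2)
  have cN : ContinuousOn N (Icc 0 T) :=
    (continuousOn_integral_slice (g := fun s x => f s x ^ 2) hT.le hL (hf.pow 2)).sqrt
  have cB : ContinuousOn B (Icc 0 T) :=
    continuousOn_integral_slice (g := fun s x => u s x * f s x) hT.le hL (hu.mul hf)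
  have E_nonneg : ∀ s, 0 ≤ E s := fun s => integral_nonneg hL fun x _ => sq_nonneg _
  have G_nonneg : ∀ s, 0 ≤ G s := fun s => integral_nonneg hL fun x _ => sq_nonneg _
  have N_nonneg : ∀ s, 0 ≤ N s := fun s => Real.sqrt_nonneg _
  have ii : ∀ {g : ℝ → ℝ}, ContinuousOn g (Icc 0 T) → ∀ {r : ℝ}, r ∈ Icc 0 T →
      IntervalIntegrable g volume 0 r := fun hg r hr =>
    (hg.mono (Icc_subset_Icc_right hr.2)).intervalIntegrable_of_Icc hr.1
  have identity : ∀ r ∈ Icc (0:ℝ) T,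
      E r + 2 * ν * ∫ s in (0:ℝ)..r, G s = E 0 + 2 * ∫ s in (0:ℝ)..r, B s := by
    intro r hr
    have h1 := energy_eq hL hr hu hut hdt
    have h2 : ∫ s in (0:ℝ)..r, ∫ x in (0:ℝ)..Real.pi, 2 * u s x * ut s x
        = ∫ s in (0:ℝ)..r, (2 * B s - 2 * ν * G s) := by
      refine integral_congr fun s hs => ?_
      rw [uIcc_of_le hr.1] at hs
      have hs' : s ∈ Icc 0 T := Icc_subset_Icc_right hr.2 hs
      exact integral_two_mul_u_ut hL (continuousOn_slice_right hf hs')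
        (continuousOn_slice_right hu hs') (continuousOn_slice_right hux hs')
        (continuousOn_slice_right huxx hs') (hdx s hs') (hdxx s hs') (hPDE s hs')
        (hBC s hs').1 (hBC s hs').2
    rw [h2, integral_sub ((ii cB hr).const_mul _) ((ii cG hr).const_mul _),
      intervalIntegral.integral_const_mul, intervalIntegral.integral_const_mul] at h1
    simp only [hE]
    linarith
  intro t ht
  have hsub : Icc 0 t ⊆ Icc 0 T := Icc_subset_Icc_right ht.2
  obtain ⟨m, hm, hmax⟩ := isCompact_Icc.exists_isMaxOn (nonempty_Icc.2 ht.1) (cE.mono hsub)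
  set M := √(E m) with hM
  set A := ∫ s in (0:ℝ)..t, N s with hA
  have bound : ∀ r ∈ Icc (0:ℝ) t, ∫ s in (0:ℝ)..r, B s ≤ M * A := by
    intro r hr
    have hr' := hsub hr
    calc ∫ s in (0:ℝ)..r, B s ≤ ∫ s in (0:ℝ)..r, M * N s := by
          refine integral_mono_on hr.1 (ii cB hr') ((ii cN hr').const_mul _) fun s hs => ?_
          have hst : s ∈ Icc 0 t := Icc_subset_Icc_right hr.2 hs
          refine (integral_mul_le_sqrt_mul_sqrt hL (continuousOn_slice_right hu (hsub hst))
            (continuousOn_slice_right hf (hsub hst))).trans ?_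
          exact mul_le_mul_of_nonneg_right (Real.sqrt_le_sqrt (hmax hst)) (N_nonneg s)
      _ = M * ∫ s in (0:ℝ)..r, N s := intervalIntegral.integral_const_mul _ _
      _ ≤ M * A := by
          refine mul_le_mul_of_nonneg_left ?_ (Real.sqrt_nonneg _)
          exact integral_mono_interval le_rfl hr.1 hr.2
            (Filter.Eventually.of_forall fun s => N_nonneg s) (ii cN ht)
  have hM2 : M ^ 2 = E m := Real.sq_sqrt (E_nonneg m)
  have hm1 := identity m (hsub hm)
  have hm2 := bound m hm
  have hm3 : 0 ≤ 2 * ν * ∫ s in (0:ℝ)..m, G s :=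
    mul_nonneg (by positivity) (integral_nonneg hm.1 fun s _ => G_nonneg s)
  have ht1 := identity t ht
  have ht2 := bound t ⟨ht.1, le_rfl⟩
  change E t + 2 * ν * ∫ s in (0:ℝ)..t, G s ≤ 2 * E 0 + 4 * A ^ 2
  -- `2MA ≤ M²/2 + 2A²` is the square `(M - 2A)² ≥ 0`.
  nlinarith [sq_nonneg (M - 2 * A)]
end

section
/- Let ν > 0, T > 0 and let f : [0,T]×[0,π] → ℝ be continuous. Suppose u₁ and u₂ are two functions from [0,T]×[0,π] to ℝ, each continuous with continuous partial derivatives ∂ₜuᵢ, ∂ₓuᵢ, ∂ₓ²uᵢ, each satisfying the Burgers equation ∂ₜuᵢ − ν ∂ₓ²uᵢ + uᵢ ∂ₓuᵢ = f on [0,T]×[0,π] and the Dirichlet boundary conditions uᵢ(t,0) = uᵢ(t,π) = 0 for all t ∈ [0,T]. If u₁(0,x) = u₂(0,x) for all x ∈ [0,π], then u₁ = u₂ on [0,T]×[0,π]. -/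
/-!
The proof is a maximum principle. The difference `w = u₁ - u₂` of two solutions satisfies the linear
parabolic equation `wₜ = ν wₓₓ - u₁ wₓ - (∂ₓu₂) w` with zero initial and boundary values, and
`∂ₓu₂ ≥ -M` by compactness. If `w` were positive somewhere, `z = exp (-(M + 1) t) w` would have a
positive maximum over the rectangle, at a point `(t₀, x₀)` with `t₀ > 0` and `x₀` interior. There
`wₓ = 0`, `wₓₓ ≤ 0` and `zₜ ≥ 0`, so that `(M + 1) w ≤ wₜ ≤ M w`, which is absurd
(`linear_max_principle`). Exchanging `u₁` and `u₂` gives the reverse inequality.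
-/

open MeasureTheory Set intervalIntegral

/-- Second-order necessary condition at an interior maximum. -/
lemma second_deriv_nonpos_of_isLocalMax {g g' : ℝ → ℝ} {c x : ℝ} (hmax : IsLocalMax g x)
    (hg : ∀ᶠ y in nhds x, HasDerivAt g (g' y) y) (hg' : HasDerivAt g' c x) : c ≤ 0 := by
  by_contra! hc
  have hd : deriv g =ᶠ[nhds x] g' := hg.mono fun y hy => hy.deriv
  have hdd : deriv (deriv g) x = c := by rw [hd.deriv_eq, hg'.deriv]
  have hmin : IsLocalMin g x :=
    isLocalMin_of_deriv_deriv_pos (by rw [hdd]; exact hc) hmax.deriv_eq_zero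
      hg.self_of_nhds.continuousAt
  -- A point that is both a local maximum and a local minimum makes `g` locally constant.
  have hconst : g =ᶠ[nhds x] fun _ => g x := by
    filter_upwards [hmax, hmin] with y h1 h2 using le_antisymm h1 h2
  have h0 : deriv (deriv g) x = 0 := by
    rw [hconst.deriv.deriv_eq]
    simp
  linarith

/-- At a maximum over `[0, T]` attained at a positive time, possibly the endpoint `T`, the
derivative within the interval is nonnegative. -/
lemma deriv_nonneg_of_max_left {g : ℝ → ℝ} {c T t : ℝ} (ht : t ∈ Icc 0 T) (ht0 : 0 < t)
    (hmax : ∀ s ∈ Icc 0 T, g s ≤ g t) (hg : HasDerivWithinAt g c (Icc 0 T) t) : 0 ≤ c := by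
  have hm : IsLocalMaxOn g (Icc 0 T) t := IsMaxOn.localize hmax
  have hy : (0 - t) ∈ posTangentConeAt (Icc 0 T) t := by
    apply sub_mem_posTangentConeAt_of_segment_subset
    exact (convex_Icc 0 T).segment_subset ht ⟨le_rfl, ht0.le.trans ht.2⟩
  have h := hm.hasFDerivWithinAt_nonpos hg.hasFDerivWithinAt hy
  simp at h
  exact nonneg_of_mul_nonneg_right h ht0

/-- Weak maximum principle for `wₜ = ν wₓₓ - a wₓ - b w` with `b ≥ -M` and zero initial and boundary
values. The factor `exp (-(M + 1) t)` in the proof absorbs the zeroth-order term. -/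
lemma linear_max_principle {ν T L M : ℝ} (hν : 0 < ν)
    {w wt wx wxx a b : ℝ → ℝ → ℝ}
    (hw : ContinuousOn (fun p : ℝ × ℝ => w p.1 p.2) (Icc 0 T ×ˢ Icc 0 L))
    (hdt : ∀ t ∈ Icc 0 T, ∀ x ∈ Icc 0 L,
      HasDerivWithinAt (fun s => w s x) (wt t x) (Icc 0 T) t)
    (hdx : ∀ t ∈ Icc 0 T, ∀ x ∈ Icc 0 L,
      HasDerivWithinAt (fun y => w t y) (wx t x) (Icc 0 L) x)
    (hdxx : ∀ t ∈ Icc 0 T, ∀ x ∈ Icc 0 L,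
      HasDerivWithinAt (fun y => wx t y) (wxx t x) (Icc 0 L) x)
    (hPDE : ∀ t ∈ Icc 0 T, ∀ x ∈ Icc 0 L,
      wt t x = ν * wxx t x - a t x * wx t x - b t x * w t x)
    (hb : ∀ t ∈ Icc 0 T, ∀ x ∈ Icc 0 L, -M ≤ b t x)
    (hBC : ∀ t ∈ Icc 0 T, w t 0 = 0 ∧ w t L = 0)
    (hIC : ∀ x ∈ Icc 0 L, w 0 x = 0) :
    ∀ t ∈ Icc 0 T, ∀ x ∈ Icc 0 L, w t x ≤ 0 := by
  intro t ht x hx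
  by_contra! hpos
  have hc : ContinuousOn (fun p : ℝ × ℝ => Real.exp (-(M + 1) * p.1) * w p.1 p.2)
      (Icc 0 T ×ˢ Icc 0 L) := ContinuousOn.mul (by fun_prop) hw
  obtain ⟨⟨t₀, x₀⟩, ⟨ht₀, hx₀⟩, hmax⟩ :=
    (isCompact_Icc.prod isCompact_Icc).exists_isMaxOn ⟨(t, x), ht, hx⟩ hc
  have hm : ∀ s ∈ Icc 0 T, ∀ y ∈ Icc 0 L,
      Real.exp (-(M + 1) * s) * w s y ≤ Real.exp (-(M + 1) * t₀) * w t₀ x₀ :=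
    fun s hs y hy => hmax (show (s, y) ∈ Icc 0 T ×ˢ Icc 0 L from ⟨hs, hy⟩)
  simp only at ht₀ hx₀
  have hw0 : 0 < w t₀ x₀ := by
    have h1 := hm t ht x hx
    have h2 : 0 < Real.exp (-(M + 1) * t) * w t x := by positivity
    exact pos_of_mul_pos_right (h2.trans_le h1) (Real.exp_pos _).le
  have ht0 : 0 < t₀ := by
    rcases ht₀.1.eq_or_lt with h | h
    · rw [← h, hIC x₀ hx₀] at hw0
      exact absurd hw0 (lt_irrefl _)
    · exact h
  have hx0 : x₀ ∈ Ioo 0 L := by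
    refine ⟨lt_of_le_of_ne hx₀.1 ?_, lt_of_le_of_ne hx₀.2 ?_⟩
    · intro h
      rw [← h, (hBC t₀ ht₀).1] at hw0
      exact lt_irrefl _ hw0
    · intro h
      rw [h, (hBC t₀ ht₀).2] at hw0
      exact lt_irrefl _ hw0
  have hlm : IsLocalMax (fun y => w t₀ y) x₀ := by
    filter_upwards [Icc_mem_nhds hx0.1 hx0.2] with y hy
    exact le_of_mul_le_mul_left (hm t₀ ht₀ y hy) (Real.exp_pos _)
  have hx1 : wx t₀ x₀ = 0 :=
    hlm.hasDerivAt_eq_zero ((hdx t₀ ht₀ x₀ hx₀).hasDerivAt (Icc_mem_nhds hx0.1 hx0.2))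
  have hx2 : wxx t₀ x₀ ≤ 0 := by
    refine second_deriv_nonpos_of_isLocalMax hlm (g' := fun y => wx t₀ y) ?_
      ((hdxx t₀ ht₀ x₀ hx₀).hasDerivAt (Icc_mem_nhds hx0.1 hx0.2))
    filter_upwards [Ioo_mem_nhds hx0.1 hx0.2] with y hy
    exact (hdx t₀ ht₀ y (Ioo_subset_Icc_self hy)).hasDerivAt (Icc_mem_nhds hy.1 hy.2)
  have hlin : HasDerivWithinAt (fun s : ℝ => -(M + 1) * s) (-(M + 1)) (Icc 0 T) t₀ := by
    simpa using (hasDerivWithinAt_id t₀ (Icc 0 T)).const_mul (-(M + 1))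
  have ht1 := deriv_nonneg_of_max_left ht₀ ht0 (fun s hs => hm s hs x₀ hx₀)
    (hlin.exp.mul (hdt t₀ ht₀ x₀ hx₀))
  have ht2 : 0 ≤ wt t₀ x₀ - (M + 1) * w t₀ x₀ := by
    refine nonneg_of_mul_nonneg_right (a := Real.exp (-(M + 1) * t₀)) ?_ (Real.exp_pos _)
    linarith
  have hp := hPDE t₀ ht₀ x₀ hx₀
  rw [hx1] at hp
  nlinarith [mul_nonneg hν.le (neg_nonneg.2 hx2),
    mul_nonneg (neg_le_iff_add_nonneg.1 (hb t₀ ht₀ x₀ hx₀)) hw0.le]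

/-- Comparison for Burgers: a solution is at most any other one with the same initial and boundary
values. The roles of the two solutions are exchanged to deduce uniqueness. -/
lemma burgers_le {ν T L : ℝ} (hν : 0 < ν)
    {f u₁ u₂ ut₁ ux₁ uxx₁ ut₂ ux₂ uxx₂ : ℝ → ℝ → ℝ}
    (hu₁ : ContinuousOn (fun p : ℝ × ℝ => u₁ p.1 p.2) (Icc 0 T ×ˢ Icc 0 L))
    (hu₂ : ContinuousOn (fun p : ℝ × ℝ => u₂ p.1 p.2) (Icc 0 T ×ˢ Icc 0 L))
    (hux₂ : ContinuousOn (fun p : ℝ × ℝ => ux₂ p.1 p.2) (Icc 0 T ×ˢ Icc 0 L))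
    (hdt₁ : ∀ t ∈ Icc 0 T, ∀ x ∈ Icc 0 L,
      HasDerivWithinAt (fun s => u₁ s x) (ut₁ t x) (Icc 0 T) t)
    (hdx₁ : ∀ t ∈ Icc 0 T, ∀ x ∈ Icc 0 L,
      HasDerivWithinAt (fun y => u₁ t y) (ux₁ t x) (Icc 0 L) x)
    (hdxx₁ : ∀ t ∈ Icc 0 T, ∀ x ∈ Icc 0 L,
      HasDerivWithinAt (fun y => ux₁ t y) (uxx₁ t x) (Icc 0 L) x)
    (hdt₂ : ∀ t ∈ Icc 0 T, ∀ x ∈ Icc 0 L,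
      HasDerivWithinAt (fun s => u₂ s x) (ut₂ t x) (Icc 0 T) t)
    (hdx₂ : ∀ t ∈ Icc 0 T, ∀ x ∈ Icc 0 L,
      HasDerivWithinAt (fun y => u₂ t y) (ux₂ t x) (Icc 0 L) x)
    (hdxx₂ : ∀ t ∈ Icc 0 T, ∀ x ∈ Icc 0 L,
      HasDerivWithinAt (fun y => ux₂ t y) (uxx₂ t x) (Icc 0 L) x)
    (hPDE₁ : ∀ t ∈ Icc 0 T, ∀ x ∈ Icc 0 L,
      ut₁ t x - ν * uxx₁ t x + u₁ t x * ux₁ t x = f t x)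
    (hPDE₂ : ∀ t ∈ Icc 0 T, ∀ x ∈ Icc 0 L,
      ut₂ t x - ν * uxx₂ t x + u₂ t x * ux₂ t x = f t x)
    (hBC₁ : ∀ t ∈ Icc 0 T, u₁ t 0 = 0 ∧ u₁ t L = 0)
    (hBC₂ : ∀ t ∈ Icc 0 T, u₂ t 0 = 0 ∧ u₂ t L = 0)
    (hIC : ∀ x ∈ Icc 0 L, u₁ 0 x = u₂ 0 x) :
    ∀ t ∈ Icc 0 T, ∀ x ∈ Icc 0 L, u₁ t x ≤ u₂ t x := by
  obtain ⟨M, hM⟩ := (isCompact_Icc.prod isCompact_Icc).exists_bound_of_continuousOn hux₂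
  have key := linear_max_principle (M := M) hν
    (w := fun t x => u₁ t x - u₂ t x) (wt := fun t x => ut₁ t x - ut₂ t x)
    (wx := fun t x => ux₁ t x - ux₂ t x) (wxx := fun t x => uxx₁ t x - uxx₂ t x)
    (a := u₁) (b := ux₂) (hu₁.sub hu₂)
    (fun t ht x hx => (hdt₁ t ht x hx).sub (hdt₂ t ht x hx))
    (fun t ht x hx => (hdx₁ t ht x hx).sub (hdx₂ t ht x hx))
    (fun t ht x hx => (hdxx₁ t ht x hx).sub (hdxx₂ t ht x hx))
    (fun t ht x hx => by linear_combination hPDE₁ t ht x hx - hPDE₂ t ht x hx)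
    (fun t ht x hx => (abs_le.1 (hM (t, x) ⟨ht, hx⟩)).1)
    (fun t ht => by simp [hBC₁ t ht, hBC₂ t ht])
    (fun x hx => by simp [hIC x hx])
  exact fun t ht x hx => sub_nonpos.1 (key t ht x hx)

/-- Uniqueness of classical solutions of the Burgers equation on `[0,T] × [0,π]`
with Dirichlet boundary conditions: two solutions with the same initial data coincide. -/
theorem burgers_uniqueness
    (ν T : ℝ) (hν : 0 < ν) (hT : 0 < T)
    (f u₁ u₂ ut₁ ux₁ uxx₁ ut₂ ux₂ uxx₂ : ℝ → ℝ → ℝ)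
    (hf : ContinuousOn (fun p : ℝ × ℝ => f p.1 p.2) (Icc 0 T ×ˢ Icc 0 Real.pi))
    (hu₁ : ContinuousOn (fun p : ℝ × ℝ => u₁ p.1 p.2) (Icc 0 T ×ˢ Icc 0 Real.pi))
    (hut₁ : ContinuousOn (fun p : ℝ × ℝ => ut₁ p.1 p.2) (Icc 0 T ×ˢ Icc 0 Real.pi))
    (hux₁ : ContinuousOn (fun p : ℝ × ℝ => ux₁ p.1 p.2) (Icc 0 T ×ˢ Icc 0 Real.pi))
    (huxx₁ : ContinuousOn (fun p : ℝ × ℝ => uxx₁ p.1 p.2) (Icc 0 T ×ˢ Icc 0 Real.pi))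
    (hu₂ : ContinuousOn (fun p : ℝ × ℝ => u₂ p.1 p.2) (Icc 0 T ×ˢ Icc 0 Real.pi))
    (hut₂ : ContinuousOn (fun p : ℝ × ℝ => ut₂ p.1 p.2) (Icc 0 T ×ˢ Icc 0 Real.pi))
    (hux₂ : ContinuousOn (fun p : ℝ × ℝ => ux₂ p.1 p.2) (Icc 0 T ×ˢ Icc 0 Real.pi))
    (huxx₂ : ContinuousOn (fun p : ℝ × ℝ => uxx₂ p.1 p.2) (Icc 0 T ×ˢ Icc 0 Real.pi))
    (hdt₁ : ∀ t ∈ Icc (0:ℝ) T, ∀ x ∈ Icc (0:ℝ) Real.pi,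
      HasDerivWithinAt (fun s => u₁ s x) (ut₁ t x) (Icc 0 T) t)
    (hdx₁ : ∀ t ∈ Icc (0:ℝ) T, ∀ x ∈ Icc (0:ℝ) Real.pi,
      HasDerivWithinAt (fun y => u₁ t y) (ux₁ t x) (Icc 0 Real.pi) x)
    (hdxx₁ : ∀ t ∈ Icc (0:ℝ) T, ∀ x ∈ Icc (0:ℝ) Real.pi,
      HasDerivWithinAt (fun y => ux₁ t y) (uxx₁ t x) (Icc 0 Real.pi) x)
    (hdt₂ : ∀ t ∈ Icc (0:ℝ) T, ∀ x ∈ Icc (0:ℝ) Real.pi,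
      HasDerivWithinAt (fun s => u₂ s x) (ut₂ t x) (Icc 0 T) t)
    (hdx₂ : ∀ t ∈ Icc (0:ℝ) T, ∀ x ∈ Icc (0:ℝ) Real.pi,
      HasDerivWithinAt (fun y => u₂ t y) (ux₂ t x) (Icc 0 Real.pi) x)
    (hdxx₂ : ∀ t ∈ Icc (0:ℝ) T, ∀ x ∈ Icc (0:ℝ) Real.pi,
      HasDerivWithinAt (fun y => ux₂ t y) (uxx₂ t x) (Icc 0 Real.pi) x)
    (hPDE₁ : ∀ t ∈ Icc (0:ℝ) T, ∀ x ∈ Icc (0:ℝ) Real.pi,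
      ut₁ t x - ν * uxx₁ t x + u₁ t x * ux₁ t x = f t x)
    (hPDE₂ : ∀ t ∈ Icc (0:ℝ) T, ∀ x ∈ Icc (0:ℝ) Real.pi,
      ut₂ t x - ν * uxx₂ t x + u₂ t x * ux₂ t x = f t x)
    (hBC₁ : ∀ t ∈ Icc (0:ℝ) T, u₁ t 0 = 0 ∧ u₁ t Real.pi = 0)
    (hBC₂ : ∀ t ∈ Icc (0:ℝ) T, u₂ t 0 = 0 ∧ u₂ t Real.pi = 0)
    (hIC : ∀ x ∈ Icc (0:ℝ) Real.pi, u₁ 0 x = u₂ 0 x) :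
    ∀ t ∈ Icc (0:ℝ) T, ∀ x ∈ Icc (0:ℝ) Real.pi, u₁ t x = u₂ t x := by
  exact fun t ht x hx => le_antisymm
    (burgers_le hν hu₁ hu₂ hux₂ hdt₁ hdx₁ hdxx₁ hdt₂ hdx₂ hdxx₂ hPDE₁ hPDE₂ hBC₁ hBC₂ hIC t ht x hx)
    (burgers_le hν hu₂ hu₁ hux₁ hdt₂ hdx₂ hdxx₂ hdt₁ hdx₁ hdxx₁ hPDE₂ hPDE₁ hBC₂ hBC₁
      (fun y hy => (hIC y hy).symm) t ht x hx)
end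

section
/- For every integer k ≥ 2, the real linear span of the set E_k ∪ { x ↦ ξ(x)·(ξ')′(x) + ξ'(x)·ξ′(x) : ξ ∈ E_k, ξ' ∈ E₁ } (where ξ′ and (ξ')′ denote derivatives) equals E_{k+1}, as subspaces of the space of functions from ℝ to ℝ. -/
/-!
For `ξ' = c sin`, the symmetrized product is the derivative of `ξ ξ'`, and the product-to-sum
formula gives
`(sin (j x) sin x)' = ((j + 1) sin ((j + 1) x) - (j - 1) sin ((j - 1) x)) / 2`.
By linearity in `ξ`, all symmetrized products lie in `E_{k+1}`. Conversely, taking `j = k` and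
adding the multiple of `sin ((k - 1) x) ∈ E_k` recovers the only missing generator
`sin ((k + 1) x)`, whose coefficient `(k + 1) / 2` does not vanish.
-/

open Set

/-- `sineSpan k` is the real linear span of the functions `x ↦ sin (j x)` for `1 ≤ j ≤ k`,
regarded as a subspace of the space of functions from `ℝ` to `ℝ`. -/
def sineSpan (k : ℕ) : Submodule ℝ (ℝ → ℝ) :=
  Submodule.span ℝ {f : ℝ → ℝ | ∃ j : ℕ, 1 ≤ j ∧ j ≤ k ∧ f = fun x => Real.sin (j * x)}

/-- The index `j = 0` is allowed, since it gives the zero function. -/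
lemma sin_mem_sineSpan {j k : ℕ} (h : j ≤ k) :
    (fun x : ℝ => Real.sin (j * x)) ∈ sineSpan k := by
  rcases Nat.eq_zero_or_pos j with rfl | hj
  · convert (sineSpan k).zero_mem using 1
    ext x
    simp
  · exact Submodule.subset_span ⟨j, hj, h, rfl⟩

lemma sineSpan_mono {k l : ℕ} (h : k ≤ l) : sineSpan k ≤ sineSpan l :=
  Submodule.span_mono fun _ ⟨j, h1, h2, h3⟩ => ⟨j, h1, h2.trans h, h3⟩

lemma exists_eq_smul_sin_of_mem_sineSpan_one {f : ℝ → ℝ} (hf : f ∈ sineSpan 1) :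
    ∃ c : ℝ, f = fun x => c * Real.sin x := by
  have hset : {f : ℝ → ℝ | ∃ j : ℕ, 1 ≤ j ∧ j ≤ 1 ∧ f = fun x => Real.sin (j * x)}
      = {fun x => Real.sin x} := by
    ext g
    constructor
    · rintro ⟨j, h1, h2, rfl⟩
      obtain rfl : j = 1 := le_antisymm h2 h1
      simp
    · rintro rfl
      exact ⟨1, le_rfl, le_rfl, by simp⟩
  rw [sineSpan, hset, Submodule.mem_span_singleton] at hf
  obtain ⟨c, rfl⟩ := hf
  exact ⟨c, rfl⟩

lemma deriv_sin_natCast_mul (j : ℕ) (x : ℝ) :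
    deriv (fun x : ℝ => Real.sin (j * x)) x = j * Real.cos (j * x) := by
  have h := ((hasDerivAt_id x).const_mul (j : ℝ)).sin
  simp only [id, mul_one] at h
  rw [h.deriv, mul_comm]

/-- The product-to-sum formula for the symmetrized product of `sin ((m + 1) x)` and `sin x`;
the shift `j = m + 1` avoids truncated subtraction in `j - 1`. -/
lemma symm_product_sin (m : ℕ) (x : ℝ) :
    Real.sin ((m + 1 : ℕ) * x) * Real.cos x
        + Real.sin x * deriv (fun x : ℝ => Real.sin ((m + 1 : ℕ) * x)) x
      = ((m + 2) / 2) * Real.sin ((m + 2 : ℕ) * x) - (m / 2) * Real.sin (m * x) := by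
  rw [deriv_sin_natCast_mul]
  have h1 : ((m + 2 : ℕ) : ℝ) * x = (m + 1 : ℕ) * x + x := by push_cast; ring
  have h2 : (m : ℝ) * x = (m + 1 : ℕ) * x - x := by push_cast; ring
  rw [h1, h2, Real.sin_add, Real.sin_sub]
  push_cast
  ring

/-- Differentiability is carried along because `deriv` is additive only on differentiable
functions. -/
lemma symm_product_mem {k : ℕ} {ξ : ℝ → ℝ} (hξ : ξ ∈ sineSpan k) :
    Differentiable ℝ ξ ∧
      (fun x => ξ x * Real.cos x + Real.sin x * deriv ξ x) ∈ sineSpan (k + 1) := by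
  induction hξ using Submodule.span_induction with
  | mem f hf =>
    obtain ⟨j, h1, h2, rfl⟩ := hf
    refine ⟨by fun_prop, ?_⟩
    obtain ⟨m, rfl⟩ : ∃ m, j = m + 1 := ⟨j - 1, by omega⟩
    simp only [symm_product_sin]
    exact Submodule.sub_mem _
      (Submodule.smul_mem _ (((m : ℝ) + 2) / 2) (sin_mem_sineSpan (j := m + 2) (by omega)))
      (Submodule.smul_mem _ ((m : ℝ) / 2) (sin_mem_sineSpan (j := m) (by omega)))
  | zero =>
    refine ⟨differentiable_const 0, ?_⟩
    convert (sineSpan (k + 1)).zero_mem using 1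
    ext x
    simp
  | add f g _ _ hf hg =>
    refine ⟨hf.1.add hg.1, ?_⟩
    convert Submodule.add_mem _ hf.2 hg.2 using 1
    ext x
    simp only [Pi.add_apply, deriv_add (hf.1 x) (hg.1 x)]
    ring
  | smul c f _ hf =>
    refine ⟨hf.1.const_smul c, ?_⟩
    convert Submodule.smul_mem _ c hf.2 using 1
    ext x
    simp only [Pi.smul_apply, smul_eq_mul, deriv_const_smul c (hf.1 x)]
    ring

/-- Lemma 2.7 of the paper: `F(E₁, E_k) = E_{k+1}`, i.e. the span of `E_k` together with the
symmetrized products `ξ ∂ₓξ' + ξ' ∂ₓξ` with `ξ ∈ E_k`, `ξ' ∈ E₁` equals `E_{k+1}`. -/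
theorem sineSpan_saturation (k : ℕ) (hk : 2 ≤ k) :
    Submodule.span ℝ
      ((sineSpan k : Set (ℝ → ℝ)) ∪
        {g : ℝ → ℝ | ∃ ξ ∈ sineSpan k, ∃ ξ' ∈ sineSpan 1,
          g = fun x => ξ x * deriv ξ' x + ξ' x * deriv ξ x})
      = sineSpan (k + 1) := by
  apply le_antisymm
  · rw [Submodule.span_le]
    rintro g (hg | ⟨ξ, hξ, ξ', hξ', rfl⟩)
    · exact sineSpan_mono (Nat.le_succ k) hg
    · obtain ⟨c, rfl⟩ := exists_eq_smul_sin_of_mem_sineSpan_one hξ'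
      have h := Submodule.smul_mem _ c (symm_product_mem hξ).2
      rw [SetLike.mem_coe]
      convert h using 1
      ext x
      simp only [Pi.smul_apply, smul_eq_mul, deriv_const_mul_field, Real.deriv_sin]
      ring
  · refine Submodule.span_le.2 ?_
    rintro _ ⟨j, h1, h2, rfl⟩
    rcases Nat.lt_or_ge k j with hlt | hle
    · obtain ⟨m, rfl⟩ : ∃ m, k = m + 1 := ⟨k - 1, by omega⟩
      obtain rfl : j = m + 2 := by omega
      set S := Submodule.span ℝ
        ((sineSpan (m + 1) : Set (ℝ → ℝ)) ∪
          {g : ℝ → ℝ | ∃ ξ ∈ sineSpan (m + 1), ∃ ξ' ∈ sineSpan 1,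
            g = fun x => ξ x * deriv ξ' x + ξ' x * deriv ξ x}) with hS
      have hlow : (fun x : ℝ => Real.sin (m * x)) ∈ S :=
        Submodule.subset_span (Or.inl (sin_mem_sineSpan (Nat.le_succ m)))
      have hprod : (fun x : ℝ => ((m + 2) / 2) * Real.sin ((m + 2 : ℕ) * x)
          - (m / 2) * Real.sin (m * x)) ∈ S := by
        refine Submodule.subset_span (Or.inr ⟨_, sin_mem_sineSpan le_rfl, _,
          sin_mem_sineSpan (j := 1) le_rfl, ?_⟩)
        ext x
        rw [← symm_product_sin]
        simp
      -- Solve the product-to-sum formula for `sin ((m + 2) x)`.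
      have h := S.smul_mem (2 / ((m : ℝ) + 2)) (S.add_mem hprod (S.smul_mem ((m : ℝ) / 2) hlow))
      rw [SetLike.mem_coe]
      convert h using 1
      ext x
      have hm : (m : ℝ) + 2 ≠ 0 := by positivity
      simp only [Pi.smul_apply, Pi.add_apply, smul_eq_mul]
      field_simp
      ring
    · exact Submodule.subset_span (Or.inl (sin_mem_sineSpan hle))
end
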